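/- Let p > 3 be a prime and let a, b ∈ ℚ_p be nonzero with |a|_p = |b|_p = 1. Then the equation x³ + a·x = b has a solution x ∈ ℚ_p with |x|_p = 1 if and only if D_0·u_{p−2}² ≢ 9a_0² (mod p). -/

import Mathlib

/-!
Modulo `X³ + AX - B` one has `X ^ (n + 2) ≡ u_n X² + u_{n+1} X + B u_{n-1}` for `n ≥ 2`. So over
a field with `q` elements the Frobenius `x ↦ x ^ q` acts on the roots of the cubic as a quadratic
polynomial with leading coefficient `u_{q-2}`. If the roots are distinct, Cramer's rule expresses
`u_{q-2} δ`, where `δ² = D` is the discriminant, through the permutation `σ` of the roots induced by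
Frobenius:
* if `σ` is a 3-cycle (no root is rational), then `u_{q-2} δ = ± 3A`, so `D u_{q-2}² = 9A²`;
* if `σ` has a fixed point and `D u_{q-2}² = 9A²`, then `δ` is rational, so `σ` is even, hence
  trivial, and `u_{q-2} δ = 0`, a contradiction.

A cubic with `D = 0` has a rational double root. Finally, a root modulo `p` lifts to `ℤ_p` by
Hensel's lemma, because a cubic `X³ + AX - B` with a root and `B ≠ 0` also has a simple root.
-/

open Polynomial Matrix Equiv

section QuadraticCoefficients

variable {R S : Type*} [CommRing R] [CommRing S] {A B : R} {u : ℕ → R}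

/-- `u n`, for `n ≥ 1`, is the coefficient of `X²` in the remainder of `X ^ (n + 2)` modulo
`X³ + AX - B`, as specified by its recurrence; `u 0` is unconstrained. -/
structure IsQuadraticCoeffSeq (A B : R) (u : ℕ → R) : Prop where
  one : u 1 = 0
  two : u 2 = -A
  three : u 3 = B
  add_three : ∀ n, 1 ≤ n → u (n + 3) = B * u n - A * u (n + 1)

namespace IsQuadraticCoeffSeq

theorem map (hu : IsQuadraticCoeffSeq A B u) (φ : R →+* S) :
    IsQuadraticCoeffSeq (φ A) (φ B) (φ ∘ u) where
  one := by simp [hu.one]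
  two := by simp [hu.two]
  three := by simp [hu.three]
  add_three n hn := by simp [hu.add_three n hn]

theorem pow_add_four_eq (hu : IsQuadraticCoeffSeq A B u) {x : R} (hx : x ^ 3 + A * x = B) (n : ℕ) :
    x ^ (n + 4) = u (n + 2) * x ^ 2 + u (n + 3) * x + B * u (n + 1) := by
  induction n with
  | zero =>
    rw [hu.one, hu.two, hu.three]
    linear_combination x * hx
  | succ n ih =>
    rw [hu.add_three (n + 1) (by lia)]
    linear_combination x * ih + u (n + 2) * hx

end IsQuadraticCoeffSeq

end QuadraticCoefficients

section Interpolation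

variable {R : Type*} [CommRing R] {r : Fin 3 → R}

/-- The numerator in Cramer's rule for the leading coefficient of the quadratic polynomial taking
the value `t i` at `r i`; the denominator is the Vandermonde determinant of `r`. -/
def interpolationDet (r t : Fin 3 → R) : R :=
  det (of fun i => ![1, r i, t i])

theorem interpolationDet_self (r : Fin 3 → R) : interpolationDet r r = 0 :=
  det_zero_of_column_eq (by decide : (1 : Fin 3) ≠ 2) fun _ => rfl

theorem interpolationDet_eq_mul_det_vandermonde {t : Fin 3 → R} {α β γ : R}
    (ht : ∀ i, t i = α * r i ^ 2 + β * r i + γ) :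
    interpolationDet r t = α * (vandermonde r).det := by
  simp only [interpolationDet, det_fin_three, vandermonde_apply, of_apply, cons_val,
    Fin.coe_ofNat_eq_mod, ht]
  ring

theorem eq_finRotate_or_eq_inv_of_forall_ne {σ : Perm (Fin 3)} (hσ : ∀ i, σ i ≠ i) :
    σ = finRotate 3 ∨ σ = (finRotate 3)⁻¹ := by
  revert σ
  decide

theorem eq_one_of_sign_eq_one_of_fixed {σ : Perm (Fin 3)} (hsign : Perm.sign σ = 1) {i : Fin 3}
    (hi : σ i = i) : σ = 1 := by
  revert σ i
  decide

theorem interpolationDet_comp_perm_sq (hsum : r 0 + r 1 + r 2 = 0) {σ : Perm (Fin 3)}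
    (hσ : ∀ i, σ i ≠ i) :
    interpolationDet r (r ∘ σ) ^ 2 = 9 * (r 0 * r 1 + r 0 * r 2 + r 1 * r 2) ^ 2 := by
  have hr2 : r 2 = -r 0 - r 1 := by linear_combination hsum
  rcases eq_finRotate_or_eq_inv_of_forall_ne hσ with rfl | rfl
  · have h0 : finRotate 3 0 = 1 := by decide
    have h1 : finRotate 3 1 = 2 := by decide
    have h2 : finRotate 3 2 = 0 := by decide
    simp only [interpolationDet, det_fin_three, of_apply, cons_val, Function.comp_apply,
      h0, h1, h2, hr2]
    ring
  · have h0 : (finRotate 3)⁻¹ 0 = 2 := by decide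
    have h1 : (finRotate 3)⁻¹ 1 = 0 := by decide
    have h2 : (finRotate 3)⁻¹ 2 = 1 := by decide
    simp only [interpolationDet, det_fin_three, of_apply, cons_val, Function.comp_apply,
      h0, h1, h2, hr2]
    ring

end Interpolation

section RootPermutation

theorem exists_perm_algHom_apply_eq {F K ι : Type*} [Field F] [Field K] [Algebra F K] [Finite ι]
    (φ : K →ₐ[F] K) {f : F[X]} {r : ι → K} (hinj : Function.Injective r)
    (hr : Set.range r = f.rootSet K) : ∃ σ : Perm ι, ∀ i, φ (r i) = r (σ i) := by
  have hmem (i : ι) : φ (r i) ∈ Set.range r := by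
    rw [hr]
    exact rootSet_mapsTo φ (hr ▸ Set.mem_range_self i)
  choose τ hτ using hmem
  have hτ_inj : Function.Injective τ := fun i j hij =>
    hinj (φ.toRingHom.injective ((hτ i).symm.trans (hij ▸ hτ j)))
  exact ⟨.ofBijective τ (Finite.injective_iff_bijective.mp hτ_inj), fun i => (hτ i).symm⟩

theorem map_det_vandermonde_eq_sign_mul {R : Type*} [CommRing R] {n : ℕ} (φ : R →+* R)
    {r : Fin n → R} {σ : Perm (Fin n)} (hσ : ∀ i, φ (r i) = r (σ i)) :
    φ (vandermonde r).det = (Perm.sign σ : ℤ) * (vandermonde r).det := by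
  rw [← det_permute, φ.map_det]
  congr 1
  ext i j
  simp [hσ]

end RootPermutation

section FiniteField

variable {F K : Type*} [Field F] [Field K] [Algebra F K]

theorem mem_range_algebraMap_iff_pow_card_eq_self [Fintype F] {x : K} :
    x ∈ Set.range (algebraMap F K) ↔ x ^ Fintype.card F = x := by
  constructor
  · rintro ⟨y, rfl⟩
    rw [← map_pow, FiniteField.pow_card]
  · intro hx
    have hroots : (X ^ Fintype.card F - X : K[X]).roots = Finset.univ.val.map (algebraMap F K) := by
      have hcard : (X ^ Fintype.card F - X : F[X]).roots.card =
          (X ^ Fintype.card F - X : F[X]).natDegree := by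
        rw [FiniteField.roots_X_pow_card_sub_X,
          FiniteField.X_pow_card_sub_X_natDegree_eq F Fintype.one_lt_card]
        rfl
      simpa [FiniteField.roots_X_pow_card_sub_X] using
        (roots_map_of_injective_of_card_eq_natDegree (algebraMap F K).injective hcard).symm
    have hx_mem : x ∈ (X ^ Fintype.card F - X : K[X]).roots := by
      rw [mem_roots (FiniteField.X_pow_card_sub_X_ne_zero K Fintype.one_lt_card)]
      simp [hx]
    rw [hroots] at hx_mem
    simpa using hx_mem

theorem four_le_card_of_two_ne_zero_of_three_ne_zero [Fintype F] (h2 : (2 : F) ≠ 0)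
    (h3 : (3 : F) ≠ 0) : 4 ≤ Fintype.card F := by
  have hcast : (Fintype.card F : F) = 0 := FiniteField.cast_card_eq_zero F
  have hcard : 1 < Fintype.card F := Fintype.one_lt_card
  by_contra! hlt
  interval_cases Fintype.card F
  · exact h2 (by exact_mod_cast hcast)
  · exact h3 (by exact_mod_cast hcast)

end FiniteField

/-- The cubic polynomial `X³ + AX - B`, whose roots are the solutions of `x³ + Ax = B`; as a `Cubic`
it comes with its discriminant and Vieta's formulas. -/
def depressedCubic {R : Type*} [Ring R] (A B : R) : Cubic R :=
  ⟨1, 0, A, -B⟩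

namespace depressedCubic

theorem discr_eq {R : Type*} [CommRing R] (A B : R) :
    (depressedCubic A B).discr = -4 * A ^ 3 - 27 * B ^ 2 := by
  simp only [depressedCubic, Cubic.discr]
  ring

section Roots

variable {F K : Type*} [Field F] [Field K] [Algebra F K] {A B : F} {r : Fin 3 → K}

theorem a_ne_zero (A B : F) : (depressedCubic A B).a ≠ 0 :=
  one_ne_zero

theorem exists_root_of_discr_eq_zero (h2 : (2 : F) ≠ 0) (hA : A ≠ 0)
    (hdiscr : (depressedCubic A B).discr = 0) : ∃ x : F, x ^ 3 + A * x = B := by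
  rw [discr_eq] at hdiscr
  refine ⟨3 * B / (2 * A), ?_⟩
  field_simp
  linear_combination -B * hdiscr

theorem exists_simple_root (h3 : (3 : F) ≠ 0) (hB : B ≠ 0) (h : ∃ x : F, x ^ 3 + A * x = B) :
    ∃ x : F, x ^ 3 + A * x = B ∧ 3 * x ^ 2 + A ≠ 0 := by
  obtain ⟨x, hx⟩ := h
  by_cases hderiv : 3 * x ^ 2 + A = 0
  · -- `x` is a double root, so the third root is `-2x`, as the roots add up to zero.
    refine ⟨-2 * x, by linear_combination hx - 3 * x * hderiv, fun hderiv' => hB ?_⟩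
    have hx0 : x = 0 := by
      have : 3 * (3 * x ^ 2) = 0 := by linear_combination hderiv' - hderiv
      simpa [h3] using this
    simp [← hx, hx0]
  · exact ⟨x, hx, hderiv⟩

theorem exists_roots_eq_of_isAlgClosed (K : Type*) [Field K] [Algebra F K] [IsAlgClosed K]
    (A B : F) :
    ∃ r : Fin 3 → K, ((depressedCubic A B).map (algebraMap F K)).roots = {r 0, r 1, r 2} := by
  obtain ⟨x, y, z, hroots⟩ := (Cubic.splits_iff_roots_eq_three (a_ne_zero A B)).mp
    (IsAlgClosed.splits ((depressedCubic A B).toPoly.map (algebraMap F K)))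
  exact ⟨![x, y, z], hroots⟩

theorem sum_roots_eq_zero
    (hr : ((depressedCubic A B).map (algebraMap F K)).roots = {r 0, r 1, r 2}) :
    r 0 + r 1 + r 2 = 0 := by
  have h := Cubic.b_eq_three_roots (a_ne_zero A B) hr
  simp only [depressedCubic, map_zero, map_one, one_mul, zero_eq_neg] at h
  exact h

theorem sum_mul_roots_eq
    (hr : ((depressedCubic A B).map (algebraMap F K)).roots = {r 0, r 1, r 2}) :
    r 0 * r 1 + r 0 * r 2 + r 1 * r 2 = algebraMap F K A := by
  simpa [depressedCubic] using (Cubic.c_eq_three_roots (a_ne_zero A B) hr).symm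

theorem det_vandermonde_roots_sq
    (hr : ((depressedCubic A B).map (algebraMap F K)).roots = {r 0, r 1, r 2}) :
    (vandermonde r).det ^ 2 = algebraMap F K (depressedCubic A B).discr := by
  rw [Cubic.discr_eq_prod_three_roots (a_ne_zero A B) hr]
  simp only [det_fin_three, vandermonde_apply, Fin.coe_ofNat_eq_mod, depressedCubic, map_one]
  ring

theorem roots_injective_iff_discr_ne_zero
    (hr : ((depressedCubic A B).map (algebraMap F K)).roots = {r 0, r 1, r 2}) :
    Function.Injective r ↔ (depressedCubic A B).discr ≠ 0 := by
  rw [← det_vandermonde_ne_zero_iff, ← _root_.map_ne_zero (algebraMap F K),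
    ← det_vandermonde_roots_sq hr, pow_ne_zero_iff two_ne_zero]

theorem range_eq_rootSet
    (hr : ((depressedCubic A B).map (algebraMap F K)).roots = {r 0, r 1, r 2}) :
    Set.range r = (depressedCubic A B).toPoly.rootSet K := by
  classical
  ext x
  rw [rootSet, aroots, ← Cubic.map_roots, hr]
  simp [Fin.exists_fin_succ, eq_comm]

theorem mem_range_iff_pow_three_add_mul_eq
    (hr : ((depressedCubic A B).map (algebraMap F K)).roots = {r 0, r 1, r 2}) (x : K) :
    x ∈ Set.range r ↔ x ^ 3 + algebraMap F K A * x = algebraMap F K B := by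
  rw [range_eq_rootSet hr,
    mem_rootSet_of_ne (Cubic.ne_zero_of_a_ne_zero (a_ne_zero A B))]
  simp [depressedCubic, Cubic.toPoly, ← sub_eq_add_neg, sub_eq_zero]

end Roots

section FrobeniusOnRoots

variable {F K : Type*} [Field F] [Fintype F] [Field K] [Algebra F K] {A B : F} {r : Fin 3 → K}
  {u : ℕ → F} {σ : Perm (Fin 3)}

theorem exists_perm_pow_card_eq
    (hr : ((depressedCubic A B).map (algebraMap F K)).roots = {r 0, r 1, r 2})
    (hinj : Function.Injective r) : ∃ σ : Perm (Fin 3), ∀ i, r i ^ Fintype.card F = r (σ i) :=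
  exists_perm_algHom_apply_eq (FiniteField.frobeniusAlgHom F K) hinj (range_eq_rootSet hr)

theorem exists_root_iff_exists_fixed
    (hr : ((depressedCubic A B).map (algebraMap F K)).roots = {r 0, r 1, r 2})
    (hinj : Function.Injective r) (hσ : ∀ i, r i ^ Fintype.card F = r (σ i)) :
    (∃ x : F, x ^ 3 + A * x = B) ↔ ∃ i, σ i = i := by
  have hfixed (i : Fin 3) : σ i = i ↔ r i ∈ Set.range (algebraMap F K) := by
    rw [mem_range_algebraMap_iff_pow_card_eq_self, hσ, hinj.eq_iff]
  have hroot (x : F) : x ^ 3 + A * x = B ↔ algebraMap F K x ∈ Set.range r := by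
    rw [mem_range_iff_pow_three_add_mul_eq hr, ← (algebraMap F K).injective.eq_iff]
    simp only [map_add, map_mul, map_pow]
  simp only [hfixed, hroot, Set.mem_range]
  exact ⟨fun ⟨x, i, h⟩ => ⟨i, x, h.symm⟩, fun ⟨i, x, h⟩ => ⟨x, i, h.symm⟩⟩

theorem interpolationDet_frobenius_eq
    (hr : ((depressedCubic A B).map (algebraMap F K)).roots = {r 0, r 1, r 2})
    (hu : IsQuadraticCoeffSeq A B u) (hcard : 4 ≤ Fintype.card F)
    (hσ : ∀ i, r i ^ Fintype.card F = r (σ i)) :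
    interpolationDet r (r ∘ σ) = algebraMap F K (u (Fintype.card F - 2)) * (vandermonde r).det := by
  obtain ⟨n, hn⟩ := Nat.exists_eq_add_of_le' hcard
  rw [hn, show n + 4 - 2 = n + 2 by lia]
  refine interpolationDet_eq_mul_det_vandermonde (β := algebraMap F K (u (n + 3)))
    (γ := algebraMap F K B * algebraMap F K (u (n + 1))) fun i => ?_
  rw [Function.comp_apply, ← hσ, hn]
  exact (hu.map (algebraMap F K)).pow_add_four_eq
    ((mem_range_iff_pow_three_add_mul_eq hr _).mp (Set.mem_range_self i)) n

theorem interpolationDet_frobenius_sq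
    (hr : ((depressedCubic A B).map (algebraMap F K)).roots = {r 0, r 1, r 2})
    (hu : IsQuadraticCoeffSeq A B u) (hcard : 4 ≤ Fintype.card F)
    (hσ : ∀ i, r i ^ Fintype.card F = r (σ i)) :
    interpolationDet r (r ∘ σ) ^ 2 =
      algebraMap F K ((depressedCubic A B).discr * u (Fintype.card F - 2) ^ 2) := by
  rw [interpolationDet_frobenius_eq hr hu hcard hσ, mul_pow, det_vandermonde_roots_sq hr, map_mul,
    map_pow, mul_comm]

theorem discr_mul_sq_eq_of_forall_ne
    (hr : ((depressedCubic A B).map (algebraMap F K)).roots = {r 0, r 1, r 2})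
    (hu : IsQuadraticCoeffSeq A B u) (hcard : 4 ≤ Fintype.card F)
    (hσ : ∀ i, r i ^ Fintype.card F = r (σ i)) (hne : ∀ i, σ i ≠ i) :
    (depressedCubic A B).discr * u (Fintype.card F - 2) ^ 2 = 9 * A ^ 2 := by
  apply (algebraMap F K).injective
  rw [← interpolationDet_frobenius_sq hr hu hcard hσ,
    interpolationDet_comp_perm_sq (sum_roots_eq_zero hr) hne, sum_mul_roots_eq hr]
  simp only [map_mul, map_pow, _root_.map_ofNat]

theorem sign_eq_one_of_mul_det_vandermonde_mem_range (h2 : (2 : F) ≠ 0)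
    (hσ : ∀ i, r i ^ Fintype.card F = r (σ i)) {c : F}
    (hne : algebraMap F K c * (vandermonde r).det ≠ 0)
    (hmem : algebraMap F K c * (vandermonde r).det ∈ Set.range (algebraMap F K)) :
    Perm.sign σ = 1 := by
  have hfrob : (vandermonde r).det ^ Fintype.card F =
      (Perm.sign σ : ℤ) * (vandermonde r).det :=
    map_det_vandermonde_eq_sign_mul (FiniteField.frobeniusAlgHom F K).toRingHom hσ
  rw [mem_range_algebraMap_iff_pow_card_eq_self, mul_pow, ← map_pow, FiniteField.pow_card,
    hfrob] at hmem
  refine (Int.units_eq_one_or _).resolve_right fun hsign => ?_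
  rw [hsign] at hmem
  have h2K : algebraMap F K 2 ≠ 0 := (_root_.map_ne_zero _).mpr h2
  refine mul_ne_zero h2K hne ?_
  push_cast at hmem
  rw [_root_.map_ofNat]
  linear_combination -hmem

theorem forall_ne_of_discr_mul_sq_eq
    (hr : ((depressedCubic A B).map (algebraMap F K)).roots = {r 0, r 1, r 2})
    (hu : IsQuadraticCoeffSeq A B u) (h2 : (2 : F) ≠ 0) (h3 : (3 : F) ≠ 0) (hA : A ≠ 0)
    (hσ : ∀ i, r i ^ Fintype.card F = r (σ i))
    (heq : (depressedCubic A B).discr * u (Fintype.card F - 2) ^ 2 = 9 * A ^ 2) (i : Fin 3) :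
    σ i ≠ i := by
  intro hi
  have hcard := four_le_card_of_two_ne_zero_of_three_ne_zero h2 h3
  have hsq : interpolationDet r (r ∘ σ) ^ 2 = algebraMap F K (3 * A) ^ 2 := by
    rw [interpolationDet_frobenius_sq hr hu hcard hσ, heq, ← map_pow]
    congr 1
    ring
  have hne : interpolationDet r (r ∘ σ) ≠ 0 := by
    rw [← pow_ne_zero_iff two_ne_zero, hsq, pow_ne_zero_iff two_ne_zero, _root_.map_ne_zero]
    exact mul_ne_zero h3 hA
  have hmem : interpolationDet r (r ∘ σ) ∈ Set.range (algebraMap F K) := by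
    rcases sq_eq_sq_iff_eq_or_eq_neg.mp hsq with h | h
    · exact ⟨3 * A, h.symm⟩
    · exact ⟨-(3 * A), by rw [h, map_neg]⟩
  have hsign : Perm.sign σ = 1 := by
    rw [interpolationDet_frobenius_eq hr hu hcard hσ] at hne hmem
    exact sign_eq_one_of_mul_det_vandermonde_mem_range h2 hσ hne hmem
  obtain rfl := eq_one_of_sign_eq_one_of_fixed hsign hi
  exact hne (interpolationDet_self r)

theorem exists_root_iff_discr_mul_sq_ne (h2 : (2 : F) ≠ 0) (h3 : (3 : F) ≠ 0) (hA : A ≠ 0)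
    (hu : IsQuadraticCoeffSeq A B u) :
    (∃ x : F, x ^ 3 + A * x = B) ↔
      (-4 * A ^ 3 - 27 * B ^ 2) * u (Fintype.card F - 2) ^ 2 ≠ 9 * A ^ 2 := by
  rw [← discr_eq]
  by_cases hdiscr : (depressedCubic A B).discr = 0
  · have hne : 9 * A ^ 2 ≠ 0 := by
      rw [show 9 * A ^ 2 = (3 * A) ^ 2 by ring]
      exact pow_ne_zero 2 (mul_ne_zero h3 hA)
    simpa only [hdiscr, zero_mul, hne.symm, ne_eq, not_false_eq_true, iff_true] using
      exists_root_of_discr_eq_zero h2 hA hdiscr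
  obtain ⟨r, hr⟩ := exists_roots_eq_of_isAlgClosed (AlgebraicClosure F) A B
  have hinj := (roots_injective_iff_discr_ne_zero hr).mpr hdiscr
  obtain ⟨σ, hσ⟩ := exists_perm_pow_card_eq hr hinj
  have hcard := four_le_card_of_two_ne_zero_of_three_ne_zero h2 h3
  rw [exists_root_iff_exists_fixed hr hinj hσ, ← not_iff_not, not_exists, not_not]
  exact ⟨discr_mul_sq_eq_of_forall_ne hr hu hcard hσ,
    forall_ne_of_discr_mul_sq_eq hr hu h2 h3 hA hσ⟩

end FrobeniusOnRoots

end depressedCubic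

section Padic

variable {p : ℕ} [Fact p.Prime]

theorem exists_padicInt_coe_eq {x : ℚ_[p]} (hx : ‖x‖ ≤ 1) : ∃ y : ℤ_[p], (y : ℚ_[p]) = x :=
  ⟨⟨x, hx⟩, rfl⟩

theorem toZMod_eq_zero_iff_norm_lt_one {x : ℤ_[p]} : PadicInt.toZMod x = 0 ↔ ‖x‖ < 1 := by
  rw [← RingHom.mem_ker, PadicInt.ker_toZMod, IsLocalRing.mem_maximalIdeal, PadicInt.mem_nonunits]

theorem toZMod_ne_zero_iff_norm_eq_one {x : ℤ_[p]} : PadicInt.toZMod x ≠ 0 ↔ ‖x‖ = 1 := by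
  rw [Ne, toZMod_eq_zero_iff_norm_lt_one, (PadicInt.norm_le_one x).lt_iff_ne, not_not]

theorem toZMod_eq_natCast_of_norm_sub_lt_one {x : ℤ_[p]} {n : ℕ}
    (h : ‖(x : ℚ_[p]) - n‖ < 1) : PadicInt.toZMod x = n := by
  rw [← sub_eq_zero, ← map_natCast PadicInt.toZMod, ← map_sub, toZMod_eq_zero_iff_norm_lt_one,
    PadicInt.norm_def]
  exact_mod_cast h

theorem zmod_natCast_ne_zero {n : ℕ} (hpos : 0 < n) (hlt : n < p) : (n : ZMod p) ≠ 0 := by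
  rw [Ne, ZMod.natCast_eq_zero_iff]
  exact Nat.not_dvd_of_pos_of_lt hpos hlt

theorem exists_isRoot_of_simple_root_toZMod {f : ℤ_[p][X]} {s : ZMod p}
    (hroot : (f.map PadicInt.toZMod).IsRoot s)
    (hsimple : ¬ (f.derivative.map PadicInt.toZMod).IsRoot s) : ∃ z : ℤ_[p], f.IsRoot z := by
  obtain ⟨y, rfl⟩ := ZMod.ringHom_surjective (PadicInt.toZMod (p := p)) s
  rw [IsRoot, eval_map_apply] at hroot hsimple
  have hnorm : ‖f.eval y‖ < 1 := toZMod_eq_zero_iff_norm_lt_one.mp hroot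
  have hnorm_deriv : ‖f.derivative.eval y‖ = 1 := toZMod_ne_zero_iff_norm_eq_one.mp hsimple
  obtain ⟨z, hz, -⟩ := hensels_lemma (F := f) (a := y) (by
    simpa only [coe_aeval_eq_eval, hnorm_deriv, one_pow] using hnorm)
  exact ⟨z, by rwa [coe_aeval_eq_eval] at hz⟩

theorem exists_norm_eq_one_root_iff (h3 : (3 : ZMod p) ≠ 0) {a b : ℤ_[p]} (hb : ‖b‖ = 1) :
    (∃ x : ℚ_[p], ‖x‖ = 1 ∧ x ^ 3 + a * x = b) ↔
      ∃ x : ZMod p, x ^ 3 + PadicInt.toZMod a * x = PadicInt.toZMod b := by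
  have hb0 : PadicInt.toZMod b ≠ 0 := toZMod_ne_zero_iff_norm_eq_one.mpr hb
  constructor
  · rintro ⟨x, hx, hxab⟩
    obtain ⟨x, rfl⟩ := exists_padicInt_coe_eq hx.le
    have hxab' : x ^ 3 + a * x = b := PadicInt.ext hxab
    exact ⟨PadicInt.toZMod x, by simp [← hxab']⟩
  · intro hmod
    obtain ⟨s, hs, hs'⟩ := depressedCubic.exists_simple_root h3 hb0 hmod
    obtain ⟨z, hz⟩ := exists_isRoot_of_simple_root_toZMod
      (f := X ^ 3 + C a * X - C b) (s := s) (by simp [hs]) (by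
        simpa [_root_.map_ofNat, two_add_one_eq_three] using hs')
    have hzab : z ^ 3 + a * z = b := by simpa [sub_eq_zero] using hz
    refine ⟨z, ?_, congrArg ((↑) : ℤ_[p] → ℚ_[p]) hzab⟩
    rw [← PadicInt.norm_def, ← toZMod_ne_zero_iff_norm_eq_one]
    intro hz0
    exact hb0 (by simp [← hzab, hz0])

end Padic

/-- For a prime `p > 3` and nonzero `a b : ℚ_p` with `|a|_p = |b|_p = 1`:
the equation `x³ + a·x = b` has a solution with `|x|_p = 1` iff
`D₀·u_{p−2}² ≢ 9a₀² (mod p)`, where `a₀, b₀` are the first digits of `a, b`,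
`D₀ = −4a₀³ − 27b₀²` and `(u_n)` is the integer sequence `u₁ = 0`, `u₂ = −a₀`, `u₃ = b₀`,
`u_{n+3} = b₀·u_n − a₀·u_{n+1}`. -/
theorem stmt_8 (p : ℕ) [Fact p.Prime] (hp : 3 < p)
    (a b : ℚ_[p]) (ha : a ≠ 0) (hb : b ≠ 0)
    (hna : ‖a‖ = 1) (hnb : ‖b‖ = 1)
    (a0 b0 : ℕ) (ha0l : 1 ≤ a0) (ha0u : a0 < p) (hb0l : 1 ≤ b0) (hb0u : b0 < p)
    (hda : ‖a - (a0 : ℚ_[p])‖ < 1) (hdb : ‖b - (b0 : ℚ_[p])‖ < 1)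
    (u : ℕ → ℤ) (hu1 : u 1 = 0) (hu2 : u 2 = -(a0 : ℤ)) (hu3 : u 3 = (b0 : ℤ))
    (hurec : ∀ n, 1 ≤ n → u (n + 3) = (b0 : ℤ) * u n - (a0 : ℤ) * u (n + 1)) :
    (∃ x : ℚ_[p], ‖x‖ = 1 ∧ x ^ 3 + a * x = b) ↔
      (((-4 * (a0 : ℤ) ^ 3 - 27 * (b0 : ℤ) ^ 2) * u (p - 2) ^ 2 : ℤ) : ZMod p) ≠
        ((9 * (a0 : ℤ) ^ 2 : ℤ) : ZMod p) := by
  obtain ⟨a, rfl⟩ := exists_padicInt_coe_eq hna.le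
  obtain ⟨b, rfl⟩ := exists_padicInt_coe_eq hnb.le
  have h2 : (2 : ZMod p) ≠ 0 := by exact_mod_cast zmod_natCast_ne_zero two_pos (by lia)
  have h3 : (3 : ZMod p) ≠ 0 := by exact_mod_cast zmod_natCast_ne_zero three_pos hp
  have hu : IsQuadraticCoeffSeq (a0 : ℤ) b0 u := ⟨hu1, hu2, hu3, hurec⟩
  have hu_mod : IsQuadraticCoeffSeq (a0 : ZMod p) b0 fun n => u n := by
    simpa [Function.comp_def] using hu.map (Int.castRingHom (ZMod p))
  rw [exists_norm_eq_one_root_iff h3 hnb, toZMod_eq_natCast_of_norm_sub_lt_one hda,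
    toZMod_eq_natCast_of_norm_sub_lt_one hdb,
    depressedCubic.exists_root_iff_discr_mul_sq_ne h2 h3 (zmod_natCast_ne_zero ha0l ha0u) hu_mod,
    ZMod.card]
  push_cast
  rfl
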